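/- Let u : A → B be a flat morphism of noetherian rings. If B is an almost Cohen-Macaulay ring, then all the fibers of u are almost Cohen-Macaulay, i.e. for every P ∈ Spec(A) the ring B_P/PB_P is almost Cohen-Macaulay. -/

import Mathlib

noncomputable section

open TensorProduct

universe u v w





/-- The depth of the ideal `I` on the module `M`: the supremum of lengths of
`M`-regular sequences with entries in `I`. -/
noncomputable def idealDepth (A : Type u) [CommRing A] (I : Ideal A)
    (M : Type v) [AddCommGroup M] [Module A M] : ℕ∞ :=
  sSup {n : ℕ∞ | ∃ rs : List A, (rs.length : ℕ∞) = n ∧ (∀ r ∈ rs, r ∈ I) ∧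
    RingTheory.Sequence.IsRegular M rs}

/-- The depth of a module over a local ring. -/
noncomputable def localDepth (A : Type u) [CommRing A] [IsLocalRing A]
    (M : Type v) [AddCommGroup M] [Module A M] : ℕ∞ :=
  idealDepth A (IsLocalRing.maximalIdeal A) M

/-- The (Krull) dimension of a module, i.e. the Krull dimension of its support. -/
noncomputable def supportDim (A : Type u) [CommRing A]
    (M : Type v) [AddCommGroup M] [Module A M] : WithBot ℕ∞ :=
  Order.krullDim (Module.support A M)

/-- `depth (M_P)` : the depth of the localization of `M` at a prime `P`,
over the local ring `A_P`. -/
noncomputable def depthAt (A : Type u) [CommRing A]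
    (M : Type v) [AddCommGroup M] [Module A M] (P : PrimeSpectrum A) : ℕ∞ :=
  localDepth (Localization.AtPrime P.asIdeal) (LocalizedModule P.asIdeal.primeCompl M)

/-- `ht_M(P) = dim (M_P)` : the height of a prime `P` in the support of `M`,
i.e. the dimension of the localized module `M_P` over `A_P`. -/
noncomputable def heightAt (A : Type u) [CommRing A]
    (M : Type v) [AddCommGroup M] [Module A M] (P : PrimeSpectrum A) : WithBot ℕ∞ :=
  supportDim (Localization.AtPrime P.asIdeal) (LocalizedModule P.asIdeal.primeCompl M)

/-- Serre's condition `(S_n)` for a module: for every `P` in the support,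
`depth (M_P) ≥ min (n, ht_M(P))`. -/
def SerreCondS (A : Type u) [CommRing A] (n : ℕ)
    (M : Type v) [AddCommGroup M] [Module A M] : Prop :=
  ∀ P ∈ Module.support A M,
    min (n : WithBot ℕ∞) (heightAt A M P) ≤ (depthAt A M P : WithBot ℕ∞)

/-- The condition `(C_n)` for a module: for every `P` in the support,
`depth (M_P) ≥ min (n, ht_M(P)) - 1`, equivalently
`min (n, ht_M(P)) ≤ depth (M_P) + 1`. -/
def CondC (A : Type u) [CommRing A] (n : ℕ)
    (M : Type v) [AddCommGroup M] [Module A M] : Prop :=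
  ∀ P ∈ Module.support A M,
    min (n : WithBot ℕ∞) (heightAt A M P) ≤ (depthAt A M P : WithBot ℕ∞) + 1

/-- A module `M` is almost Cohen-Macaulay if `depth(P, M) = depth (M_P)` for every
`P` in the support of `M` (Kang's definition). -/
def IsAlmostCMModule (A : Type u) [CommRing A]
    (M : Type v) [AddCommGroup M] [Module A M] : Prop :=
  ∀ P ∈ Module.support A M, idealDepth A P.asIdeal M = depthAt A M P

/-- A module `M` is Cohen-Macaulay if `depth (M_P) = dim (M_P)` for every `P` in its
support. -/
def IsCMModule (A : Type u) [CommRing A]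
    (M : Type v) [AddCommGroup M] [Module A M] : Prop :=
  ∀ P ∈ Module.support A M, (depthAt A M P : WithBot ℕ∞) = heightAt A M P

/-- A ring is almost Cohen-Macaulay if it is an almost Cohen-Macaulay module over
itself. -/
abbrev IsAlmostCMRing (A : Type u) [CommRing A] : Prop := IsAlmostCMModule A A

/-- A ring is Cohen-Macaulay if it is a Cohen-Macaulay module over itself, i.e. all its
localizations at primes have depth equal to dimension. -/
abbrev IsCMRing (A : Type u) [CommRing A] : Prop := IsCMModule A A

/-- A ring satisfies `(C_n)` if it does so as a module over itself. -/
abbrev RingCondC (A : Type u) [CommRing A] (n : ℕ) : Prop := CondC A n A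

/-- A ring satisfies `(S_n)` if it does so as a module over itself. -/
abbrev RingSerreCondS (A : Type u) [CommRing A] (n : ℕ) : Prop := SerreCondS A n A






variable (A : Type u) [CommRing A] (B : Type u) [CommRing B] [Algebra A B]

/-- The image in `B` of the complement of a prime `P` of `A`, as a submonoid of `B`. -/
noncomputable def fiberSubmonoid (P : PrimeSpectrum A) : Submonoid B :=
  Submonoid.map (algebraMap A B) P.asIdeal.primeCompl

/-- `PB_P` : the extension of the prime `P` of `A` to the localization `B_P` of `B`
at (the image of) the complement of `P`. -/
noncomputable def fiberIdeal (P : PrimeSpectrum A) :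
    Ideal (Localization (fiberSubmonoid A B P)) :=
  Ideal.map ((algebraMap B (Localization (fiberSubmonoid A B P))).comp (algebraMap A B))
    P.asIdeal

/-- The fiber ring `B_P / P B_P` of `A → B` at a prime `P` of `A`. -/
noncomputable def fiberRing (P : PrimeSpectrum A) : Type u :=
  Localization (fiberSubmonoid A B P) ⧸ fiberIdeal A B P

noncomputable instance (P : PrimeSpectrum A) : CommRing (fiberRing A B P) :=
  inferInstanceAs (CommRing (Localization (fiberSubmonoid A B P) ⧸ fiberIdeal A B P))

/-- The fiber module `N_P / P N_P` of a `B`-module `N` at a prime `P` of `A`. -/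
noncomputable def fiberModule (P : PrimeSpectrum A)
    (N : Type u) [AddCommGroup N] [Module B N] : Type u :=
  LocalizedModule (fiberSubmonoid A B P) N ⧸
    (fiberIdeal A B P •
      (⊤ : Submodule (Localization (fiberSubmonoid A B P))
        (LocalizedModule (fiberSubmonoid A B P) N)))

noncomputable instance (P : PrimeSpectrum A) (N : Type u) [AddCommGroup N] [Module B N] :
    AddCommGroup (fiberModule A B P N) :=
  inferInstanceAs (AddCommGroup (LocalizedModule (fiberSubmonoid A B P) N ⧸
    (fiberIdeal A B P •
      (⊤ : Submodule (Localization (fiberSubmonoid A B P))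
        (LocalizedModule (fiberSubmonoid A B P) N)))))

/-- `N_P / P N_P` is a module over the fiber ring `B_P / P B_P`. -/
noncomputable instance (P : PrimeSpectrum A) (N : Type u) [AddCommGroup N] [Module B N] :
    Module (fiberRing A B P) (fiberModule A B P N) :=
  inferInstanceAs (Module (Localization (fiberSubmonoid A B P) ⧸ fiberIdeal A B P)
    (LocalizedModule (fiberSubmonoid A B P) N ⧸
      (fiberIdeal A B P •
        (⊤ : Submodule (Localization (fiberSubmonoid A B P))
          (LocalizedModule (fiberSubmonoid A B P) N)))))

/-!
By Kang's criterion, a noetherian ring `R` is almost Cohen-Macaulay if and only if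
`ht P ≤ depth R_P + 1` for all primes `P`. This condition passes to localizations, and the local
rings of the fiber over `P` are the closed fibers `K` of flat local homomorphisms `R → C`, where `R`
is the local ring of `A` at `P` and `C` is a local ring of `B`. For these
`dim C = dim K + dim R` and `depth C = depth K + depth R`, so that
`dim K - depth K ≤ dim C - depth C` because `depth R ≤ dim R`.

The depth formula is a statement about the grade with respect to the residue field of `C`. For
a maximal regular sequence of `R`, of length `depth R`, with quotient `N`, the grade of `C` exceeds
the grade of `C ⊗ N` by `depth R`. The residue field `k` of `R` embeds into `N`, and the grades of
`C ⊗ N` and of `C ⊗ k = K` agree, because by dévissage no `C ⊗ N'`, for a finite `R`-module `N'`,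
has a smaller grade than `C ⊗ k`.
-/

section ExtGrade

open CategoryTheory Abelian

/-- The grade of `V` with respect to `L`: the least `i` such that `Ext^i(L, V) ≠ 0`, and `⊤` if
there is none. For `L = R ⧸ I` this is the Ext-theoretic counterpart of `idealDepth R I V`, to which
it is equal as long as `I V ≠ V`; the value `⊤` at `V = 0` is what lets the inequalities along short
exact sequences hold without any nonvanishing assumption. -/
def extGrade (R : Type u) [CommRing R] (L V : Type u) [AddCommGroup L] [Module R L]
    [AddCommGroup V] [Module R V] : ℕ∞ :=
  ⨅ (i : ℕ) (_ : Nontrivial (Ext (ModuleCat.of R L) (ModuleCat.of R V) i)), (i : ℕ∞)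

variable {R : Type u} [CommRing R] {L U V W : Type u} [AddCommGroup L] [Module R L]
  [AddCommGroup U] [Module R U] [AddCommGroup V] [Module R V] [AddCommGroup W] [Module R W]
  {f : U →ₗ[R] V} {g : V →ₗ[R] W}

theorem le_extGrade_iff {n : ℕ∞} :
    n ≤ extGrade R L V ↔
      ∀ i : ℕ, i < n → Subsingleton (Ext (ModuleCat.of R L) (ModuleCat.of R V) i) := by
  simp only [extGrade, le_iInf_iff, ← not_subsingleton_iff_nontrivial]
  exact forall_congr' fun i ↦ by rw [not_imp_comm, not_le]

theorem subsingleton_ext_of_lt_extGrade {i : ℕ} (h : i < extGrade R L V) :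
    Subsingleton (Ext (ModuleCat.of R L) (ModuleCat.of R V) i) :=
  le_extGrade_iff.mp le_rfl i h

theorem extGrade_pos_iff : 0 < extGrade R L V ↔ Subsingleton (L →ₗ[R] V) := by
  rw [← Order.one_le_iff_pos, le_extGrade_iff]
  simpa [Order.lt_one_iff] using
    (Ext.addEquiv₀.trans ModuleCat.homAddEquiv).toEquiv.subsingleton_congr

theorem extGrade_eq_top_of_subsingleton [Subsingleton V] : extGrade R L V = ⊤ := by
  refine top_le_iff.mp (le_extGrade_iff.mpr fun i _ ↦ subsingleton_of_forall_eq 0 fun x ↦ ?_)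
  have h : 𝟙 (ModuleCat.of R V) = 0 := by ext x; exact Subsingleton.elim (α := V) _ _
  rw [← x.comp_mk₀_id, h, Ext.mk₀_zero, Ext.comp_zero]

theorem shortExact_ofHom (hf : Function.Injective f) (hg : Function.Surjective g)
    (hfg : Function.Exact f g) :
    (ShortComplex.mk (ModuleCat.ofHom f) (ModuleCat.ofHom g)
      (by ext x; exact hfg.apply_apply_eq_zero x)).ShortExact where
  exact := ModuleCat.shortComplex_exact _ hfg
  mono_f := (ModuleCat.mono_iff_injective _).mpr hf
  epi_g := (ModuleCat.epi_iff_surjective _).mpr hg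

theorem min_extGrade_le_extGrade_middle (hf : Function.Injective f) (hg : Function.Surjective g)
    (hfg : Function.Exact f g) : min (extGrade R L U) (extGrade R L W) ≤ extGrade R L V := by
  refine le_extGrade_iff.mpr fun i hi ↦ subsingleton_of_forall_eq 0 fun x ↦ ?_
  obtain ⟨hU, hW⟩ := (lt_min_iff.mp hi).imp subsingleton_ext_of_lt_extGrade
    subsingleton_ext_of_lt_extGrade
  obtain ⟨y, rfl⟩ := Ext.covariant_sequence_exact₂ _ (shortExact_ofHom hf hg hfg) x (hW.elim _ _)
  rw [hU.elim y 0, Ext.zero_comp]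

theorem min_extGrade_le_extGrade_left (hf : Function.Injective f) (hg : Function.Surjective g)
    (hfg : Function.Exact f g) : min (extGrade R L V) (extGrade R L W + 1) ≤ extGrade R L U := by
  refine le_extGrade_iff.mpr fun i hi ↦ ?_
  obtain ⟨hV, hW⟩ := lt_min_iff.mp hi
  cases i with
  | zero =>
    refine subsingleton_ext_of_lt_extGrade (extGrade_pos_iff.mpr ?_)
    have := extGrade_pos_iff.mp hV
    exact subsingleton_of_forall_eq 0 fun h ↦ LinearMap.ext fun x ↦
      hf (by simpa using LinearMap.congr_fun (Subsingleton.elim (f ∘ₗ h) 0) x)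
  | succ i =>
    have hV := subsingleton_ext_of_lt_extGrade hV
    have hW := subsingleton_ext_of_lt_extGrade (lt_of_add_lt_add_right hW)
    refine subsingleton_of_forall_eq 0 fun x ↦ ?_
    obtain ⟨y, rfl⟩ :=
      Ext.covariant_sequence_exact₁ _ (shortExact_ofHom hf hg hfg) x (hV.elim _ _) rfl
    rw [hW.elim y 0, Ext.zero_comp]

theorem min_extGrade_le_extGrade_right (hf : Function.Injective f) (hg : Function.Surjective g)
    (hfg : Function.Exact f g) :
    min (extGrade R L V + 1) (extGrade R L U) ≤ extGrade R L W + 1 := by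
  suffices h : min (extGrade R L V) (extGrade R L U - 1) ≤ extGrade R L W by
    refine le_trans ?_ (add_le_add_left h 1)
    rw [← min_add_add_right]
    exact min_le_min_left _ le_tsub_add
  refine le_extGrade_iff.mpr fun i hi ↦ subsingleton_of_forall_eq 0 fun x ↦ ?_
  obtain ⟨hV, hU⟩ := lt_min_iff.mp hi
  have hV := subsingleton_ext_of_lt_extGrade hV
  have hU := subsingleton_ext_of_lt_extGrade (i := i + 1) (mod_cast lt_tsub_iff_right.mp hU)
  obtain ⟨y, rfl⟩ :=
    Ext.covariant_sequence_exact₃ _ (shortExact_ofHom hf hg hfg) x rfl (hU.elim _ _)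
  rw [hV.elim y 0, Ext.zero_comp]

theorem extGrade_congr (e : U ≃ₗ[R] V) : extGrade R L U = extGrade R L V := by
  have extGrade_le {U V : Type u} [AddCommGroup U] [Module R U] [AddCommGroup V] [Module R V]
      (e : U ≃ₗ[R] V) : extGrade R L U ≤ extGrade R L V := by
    simpa [extGrade_eq_top_of_subsingleton] using min_extGrade_le_extGrade_middle (L := L)
      (g := (0 : V →ₗ[R] PUnit.{u + 1})) e.injective (Function.surjective_to_subsingleton _)
      ((e.toLinearMap.exact_zero_iff_surjective _).2 e.surjective)
  exact (extGrade_le e).antisymm (extGrade_le e.symm)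

theorem extGrade_eq_add_one_of_isSMulRegular {r : R} (hL : r ∈ Module.annihilator R L)
    (hV : IsSMulRegular V r) (hg : Function.Surjective g)
    (hrg : Function.Exact (LinearMap.lsmul R V r) g) :
    extGrade R L V = extGrade R L W + 1 := by
  refine le_antisymm ?_ (le_extGrade_iff.mpr fun i hi ↦ ?_)
  · simpa using min_extGrade_le_extGrade_right (L := L) (f := LinearMap.lsmul R V r) hV hg hrg
  cases i with
  | zero =>
    exact subsingleton_ext_of_lt_extGrade
      (extGrade_pos_iff.mpr (hV.linearMap_subsingleton_of_mem_annihilator hL))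
  | succ i =>
    have hW := subsingleton_ext_of_lt_extGrade (lt_of_add_lt_add_right hi)
    refine subsingleton_of_forall_eq 0 fun x ↦ ?_
    have hx : x.comp (Ext.mk₀ (ModuleCat.ofHom (LinearMap.lsmul R V r))) (add_zero _) = 0 :=
      congr($(Ext.postcomp_smul_id_eq_zero_of_mem_annihilator (M := ModuleCat.of R V)
        (N := ModuleCat.of R L) hL (i + 1)) x)
    obtain ⟨y, rfl⟩ := Ext.covariant_sequence_exact₁ _
      (shortExact_ofHom (f := LinearMap.lsmul R V r) hV hg hrg) x hx rfl
    rw [hW.elim y 0, Ext.zero_comp]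

section BaseChange

open RingTheory.Sequence

variable {C : Type u} [CommRing C] [Algebra R C] [Module.Flat R C] {L : Type u} [AddCommGroup L]
  [Module C L] {N : Type u} [AddCommGroup N] [Module R N]

theorem extGrade_baseChange_eq_add_one {r : R} (hL : algebraMap R C r ∈ Module.annihilator C L)
    (hr : IsSMulRegular N r) :
    extGrade C L (C ⊗[R] N) = extGrade C L (C ⊗[R] QuotSMulTop r N) + 1 := by
  have hsmul : (LinearMap.lsmul R N r).baseChange C =
      LinearMap.lsmul C (C ⊗[R] N) (algebraMap R C r) := by ext; simp
  refine extGrade_eq_add_one_of_isSMulRegular hL (g := (Submodule.mkQ _).baseChange C) ?_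
    (LinearMap.lTensor_surjective C (Submodule.mkQ_surjective _)) ?_
  · have : Function.Injective ((LinearMap.lsmul R N r).baseChange C) :=
      Module.Flat.lTensor_preserves_injective_linearMap _ hr
    rwa [hsmul] at this
  · rw [← hsmul]
    exact Module.Flat.lTensor_exact C (LinearMap.exact_lsmul_mkQ_smul_top N r)

theorem extGrade_baseChange_eq_add_length {rs : List R} (hrs : IsWeaklyRegular N rs)
    (hL : ∀ r ∈ rs, algebraMap R C r ∈ Module.annihilator C L) :
    extGrade C L (C ⊗[R] N) =
      extGrade C L (C ⊗[R] (N ⧸ Ideal.ofList rs • (⊤ : Submodule R N))) + rs.length := by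
  induction rs generalizing N with
  | nil =>
    rw [List.length_nil, Nat.cast_zero, add_zero]
    exact extGrade_congr ((Submodule.quotEquivOfEqBot _ (by simp)).symm.baseChange R C _ _)
  | cons r rs ih =>
    rw [isWeaklyRegular_cons_iff] at hrs
    rw [List.forall_mem_cons] at hL
    rw [extGrade_baseChange_eq_add_one hL.1 hrs.1, ih hrs.2 hL.2, List.length_cons, Nat.cast_add,
      Nat.cast_one, add_assoc, extGrade_congr
        ((Submodule.quotOfListConsSMulTopEquivQuotSMulTopInner N r rs).baseChange R C _ _)]

end BaseChange

theorem extGrade_eq_add_length {rs : List R} (hrs : RingTheory.Sequence.IsWeaklyRegular V rs)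
    (hL : ∀ r ∈ rs, r ∈ Module.annihilator R L) :
    extGrade R L V = extGrade R L (V ⧸ Ideal.ofList rs • (⊤ : Submodule R V)) + rs.length := by
  simpa only [extGrade_congr (TensorProduct.lid R _)] using
    extGrade_baseChange_eq_add_length (C := R) hrs hL

end ExtGrade

section Depth

open RingTheory.Sequence IsLocalRing

section Basic

variable {R : Type u} [CommRing R] {M : Type v} [AddCommGroup M] [Module R M] {I J : Ideal R}

theorem isRegular_take {rs : List R} (h : IsRegular M rs) (n : ℕ) : IsRegular M (rs.take n) := by
  have hrs := h.1
  rw [← List.take_append_drop n rs, isWeaklyRegular_append_iff] at hrs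
  refine ⟨hrs.1, fun htop ↦ h.2 (top_le_iff.mp ?_).symm⟩
  exact htop.le.trans (Submodule.smul_mono_left (Ideal.span_mono fun x ↦ List.mem_of_mem_take))

theorem natCast_le_idealDepth_iff [Nontrivial M] {n : ℕ} :
    (n : ℕ∞) ≤ idealDepth R I M ↔
      ∃ rs : List R, rs.length = n ∧ (∀ r ∈ rs, r ∈ I) ∧ IsRegular M rs := by
  refine ⟨fun h ↦ ?_, fun ⟨rs, hn, hI, hrs⟩ ↦ le_sSup ⟨rs, congrArg _ hn, hI, hrs⟩⟩
  obtain - | n := n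
  · exact ⟨[], rfl, by simp, .nil R M⟩
  have hlt : (n : ℕ∞) < idealDepth R I M := lt_of_lt_of_le (mod_cast n.lt_succ_self) h
  obtain ⟨_, ⟨rs, rfl, hI, hrs⟩, hn⟩ := lt_sSup_iff.mp hlt
  exact ⟨rs.take (n + 1), List.length_take_of_le (mod_cast hn),
    fun r hr ↦ hI r (List.mem_of_mem_take hr), isRegular_take hrs _⟩

theorem idealDepth_mono (h : I ≤ J) : idealDepth R I M ≤ idealDepth R J M :=
  sSup_le_sSup fun _ ⟨rs, hn, hI, hrs⟩ ↦ ⟨rs, hn, fun r hr ↦ h (hI r hr), hrs⟩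

theorem idealDepth_congr {M' : Type w} [AddCommGroup M'] [Module R M'] (e : M ≃ₗ[R] M') :
    idealDepth R I M = idealDepth R I M' := by
  simp only [idealDepth, e.isRegular_congr]

theorem maximalIdeal_smul_top_lt_top [IsLocalRing R] [Module.Finite R M] [Nontrivial M] :
    maximalIdeal R • (⊤ : Submodule R M) < ⊤ :=
  (Submodule.top_ne_ideal_smul_of_le_jacobson_annihilator (maximalIdeal_le_jacobson _)).symm.lt_top

theorem exists_isSMulRegular_mem_iff [IsNoetherianRing R] [Module.Finite R M] :
    (∃ x ∈ I, IsSMulRegular M x) ↔ ∀ p ∈ associatedPrimes R M, ¬ I ≤ p := by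
  have h := I.subset_union_prime_finite (associatedPrimes.finite R M) (f := id) 0 0
    fun _ h _ _ ↦ IsAssociatedPrime.isPrime h
  simp only [id] at h
  rw [biUnion_associatedPrimes_eq_compl_regular R M] at h
  simpa [Set.not_subset] using not_congr h

theorem localDepth_le_supportDim [IsLocalRing R] [IsNoetherianRing R] [Module.Finite R M]
    [Nontrivial M] : (localDepth R M : WithBot ℕ∞) ≤ Module.supportDim R M := by
  obtain ⟨d, hd⟩ := WithBot.ne_bot_iff_exists.mp (Module.supportDim_ne_bot_of_nontrivial R M)
  rw [← hd, WithBot.coe_le_coe]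
  refine sSup_le ?_
  rintro _ ⟨rs, rfl, -, hrs⟩
  have := hrs.quot_ofList_smul_nontrivial ⊤
  rw [← WithBot.coe_le_coe, hd, ← Module.supportDim_add_length_eq_supportDim_of_isRegular rs hrs]
  have : Nonempty (Module.support R (M ⧸ Ideal.ofList rs • (⊤ : Submodule R M))) :=
    (Module.nonempty_support_of_nontrivial).to_subtype
  exact le_add_of_nonneg_left Order.krullDim_nonneg

end Basic

variable {R : Type u} [CommRing R] [IsNoetherianRing R] {M : Type u} [AddCommGroup M] [Module R M]
  {I : Ideal R} {rs : List R}

theorem idealDepth_eq_extGrade [Module.Finite R M] (hI : I • (⊤ : Submodule R M) < ⊤) :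
    idealDepth R I M = extGrade R (R ⧸ I) M := by
  have : Nontrivial M := (Submodule.nontrivial_iff R).mp (nontrivial_of_lt _ _ hI)
  have hsupp : Module.support R (R ⧸ I) = PrimeSpectrum.zeroLocus I := by
    rw [Module.support_eq_zeroLocus, Ideal.annihilator_quotient]
  refine ENat.eq_of_forall_natCast_le_iff fun n ↦ ?_
  simp only [natCast_le_idealDepth_iff, le_extGrade_iff, Nat.cast_lt]
  refine ⟨fun ⟨rs, hn, hmem, hrs⟩ i hi ↦ ?_, fun h ↦ ?_⟩
  · exact ModuleCat.subsingleton_ext_of_exists_isRegular I (.of R (R ⧸ I)) hsupp.le (.of R M) hI rs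
      hmem hrs i (hn ▸ hi)
  · exact ModuleCat.exists_isRegular_of_exists_subsingleton_ext I n (.of R M) hI
      (.of R (R ⧸ I)) hsupp h

theorem length_lt_idealDepth_iff [Module.Finite R M] (hI : I • (⊤ : Submodule R M) < ⊤)
    (hrs : IsWeaklyRegular M rs) (hmem : ∀ r ∈ rs, r ∈ I) :
    rs.length < idealDepth R I M ↔
      ∃ x ∈ I, IsSMulRegular (M ⧸ Ideal.ofList rs • (⊤ : Submodule R M)) x := by
  have hlt (g n : ℕ∞) (hn : n ≠ ⊤) : n < g + n ↔ 0 < g := by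
    simpa using ENat.add_lt_add_iff_right (n := 0) (m := g) hn
  rw [idealDepth_eq_extGrade hI, extGrade_eq_add_length hrs
    (by simpa [Ideal.annihilator_quotient] using hmem), hlt _ _ (ENat.natCast_ne_top _),
    extGrade_pos_iff, IsSMulRegular.subsingleton_linearMap_iff, Ideal.annihilator_quotient]

section LocalRing

variable [IsLocalRing R] [Module.Finite R M]

theorem localDepth_ne_top [Nontrivial M] : localDepth R M ≠ ⊤ := by
  have h := (localDepth_le_supportDim.trans (Module.supportDim_le_ringKrullDim R M)).trans_lt
    ringKrullDim_lt_top
  exact (WithBot.coe_lt_coe.mp h).ne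

theorem exists_isRegular_length_eq_localDepth [Nontrivial M] :
    ∃ rs : List R, rs.length = localDepth R M ∧ (∀ r ∈ rs, r ∈ maximalIdeal R) ∧
      IsRegular M rs := by
  obtain ⟨n, hn⟩ := ENat.ne_top_iff_exists.mp (localDepth_ne_top (R := R) (M := M))
  obtain ⟨rs, rfl, hmem, hrs⟩ := natCast_le_idealDepth_iff.mp hn.le
  exact ⟨rs, hn, hmem, hrs⟩

theorem exists_injective_quotient_maximalIdeal
    (h : ¬ ∃ x ∈ maximalIdeal R, IsSMulRegular M x) :
    ∃ f : (R ⧸ maximalIdeal R) →ₗ[R] M, Function.Injective f := by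
  rw [exists_isSMulRegular_mem_iff] at h
  push Not at h
  obtain ⟨p, hp, hle⟩ := h
  obtain rfl : maximalIdeal R = p := (maximalIdeal.isMaximal R).eq_of_le hp.1.ne_top hle
  exact ((isAssociatedPrime_iff_exists_injective_linearMap _ _).mp hp).2

end LocalRing

end Depth

section FlatBaseChange

open IsLocalRing

variable {R : Type u} [CommRing R] [IsNoetherianRing R] [IsLocalRing R]

theorem isSMulRegular_quotient_of_notMem {R : Type u} [CommRing R] {p : Ideal R} [p.IsPrime]
    {x : R} (hx : x ∉ p) : IsSMulRegular (R ⧸ p) x := by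
  refine (isSMulRegular_algebraMap_iff (A := R ⧸ p)).mp ?_
  exact (IsRegular.of_ne_zero (Ideal.Quotient.eq_zero_iff_mem.not.mpr hx)).left.isSMulRegular

/-- Dévissage: killing one nonzerodivisor of `R ⧸ p` in the maximal ideal at a time, every
`R ⧸ p` reduces to the residue field, because each step lowers the dimension. -/
theorem induction_on_residueField
    {motive : (N : Type u) → [AddCommGroup N] → [Module R N] → [Module.Finite R N] → Prop}
    (subsingleton : (N : Type u) → [AddCommGroup N] → [Module R N] → [Module.Finite R N] →
      [Subsingleton N] → motive N)
    (residueField : (N : Type u) → [AddCommGroup N] → [Module R N] → [Module.Finite R N] →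
      (N ≃ₗ[R] R ⧸ maximalIdeal R) → motive N)
    (exact : (N₁ : Type u) → [AddCommGroup N₁] → [Module R N₁] → [Module.Finite R N₁] →
      (N₂ : Type u) → [AddCommGroup N₂] → [Module R N₂] → [Module.Finite R N₂] →
      (N₃ : Type u) → [AddCommGroup N₃] → [Module R N₃] → [Module.Finite R N₃] →
      (f : N₁ →ₗ[R] N₂) → (g : N₂ →ₗ[R] N₃) →
      Function.Injective f → Function.Surjective g → Function.Exact f g →
      motive N₁ → motive N₃ → motive N₂)
    (quotSMulTop : (N : Type u) → [AddCommGroup N] → [Module R N] → [Module.Finite R N] →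
      (x : R) → x ∈ maximalIdeal R → IsSMulRegular N x → motive (QuotSMulTop x N) → motive N)
    ⦃N : Type u⦄ [AddCommGroup N] [Module R N] (_ : Module.Finite R N) : motive N := by
  suffices of_supportDim_lt : ∀ (d : ℕ) (N : Type u) [AddCommGroup N] [Module R N]
      [Module.Finite R N], Module.supportDim R N < d → motive N by
    obtain ⟨d, hd⟩ := ENat.ne_top_iff_exists.mp (maximalIdeal R).height_ne_top_of_isPrime
    refine of_supportDim_lt (d + 1) N ((Module.supportDim_le_ringKrullDim R N).trans_lt ?_)
    rw [← maximalIdeal_height_eq_ringKrullDim, ← hd]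
    exact_mod_cast d.lt_succ_self
  intro d
  induction d with
  | zero =>
    intro N _ _ _ hN
    have : Subsingleton N := by
      by_contra! h
      have : Nonempty (Module.support R N) := Module.nonempty_support_of_nontrivial.to_subtype
      exact hN.not_ge Order.krullDim_nonneg
    exact subsingleton N
  | succ d ih =>
    intro N _ _ hfin hN
    induction hfin using IsNoetherianRing.induction_on_isQuotientEquivQuotientPrime R with
    | subsingleton N => exact subsingleton N
    | exact N₁ N₂ N₃ f g hf hg hfg h₁ h₃ =>
      exact exact N₁ N₂ N₃ f g hf hg hfg
        (h₁ ((Module.supportDim_le_of_injective f hf).trans_lt hN))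
        (h₃ ((Module.supportDim_le_of_surjective g hg).trans_lt hN))
    | quotient N p e =>
      by_cases hp : p.asIdeal = maximalIdeal R
      · exact residueField N (hp ▸ e)
      obtain ⟨x, hx, hxp⟩ := SetLike.exists_of_lt ((le_maximalIdeal p.2.ne_top).lt_of_ne hp)
      have hreg : IsSMulRegular N x :=
        (e.isSMulRegular_congr x).mpr (isSMulRegular_quotient_of_notMem hxp)
      refine quotSMulTop N x hx hreg (ih _ ?_)
      rw [← Module.supportDim_quotSMulTop_succ_eq_supportDim hreg hx] at hN
      exact lt_of_add_lt_add_right (mod_cast hN)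

variable {C : Type u} [CommRing C] [Algebra R C] [Module.Flat R C] {L : Type u} [AddCommGroup L]
  [Module C L]

theorem extGrade_baseChange_residueField_le
    (hL : ∀ r ∈ maximalIdeal R, algebraMap R C r ∈ Module.annihilator C L)
    (N : Type u) [AddCommGroup N] [Module R N] [Module.Finite R N] :
    extGrade C L (C ⊗[R] (R ⧸ maximalIdeal R)) ≤ extGrade C L (C ⊗[R] N) := by
  induction ‹Module.Finite R N› using induction_on_residueField with
  | subsingleton N => rw [extGrade_eq_top_of_subsingleton (V := C ⊗[R] N)]; exact le_top
  | residueField N e => exact (extGrade_congr (e.baseChange R C _ _)).ge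
  | exact N₁ N₂ N₃ f g hf hg hfg h₁ h₃ =>
    exact (le_min h₁ h₃).trans <| min_extGrade_le_extGrade_middle (f := f.baseChange C)
      (g := g.baseChange C) (Module.Flat.lTensor_preserves_injective_linearMap f hf)
      (LinearMap.lTensor_surjective C hg) (Module.Flat.lTensor_exact C hfg)
  | quotSMulTop N x hx hreg h =>
    rw [extGrade_baseChange_eq_add_one (hL x hx) hreg]
    exact le_add_right h

theorem extGrade_baseChange_eq_of_injective
    (hL : ∀ r ∈ maximalIdeal R, algebraMap R C r ∈ Module.annihilator C L)
    {N : Type u} [AddCommGroup N] [Module R N] [Module.Finite R N]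
    {f : (R ⧸ maximalIdeal R) →ₗ[R] N} (hf : Function.Injective f) :
    extGrade C L (C ⊗[R] N) = extGrade C L (C ⊗[R] (R ⧸ maximalIdeal R)) := by
  refine le_antisymm ?_ (extGrade_baseChange_residueField_le hL N)
  have hcoker := extGrade_baseChange_residueField_le hL (N ⧸ LinearMap.range f)
  have hmin := min_extGrade_le_extGrade_left (L := L) (f := f.baseChange C)
    (g := (LinearMap.range f).mkQ.baseChange C)
    (Module.Flat.lTensor_preserves_injective_linearMap f hf)
    (LinearMap.lTensor_surjective C (Submodule.mkQ_surjective _))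
    (Module.Flat.lTensor_exact C (LinearMap.exact_map_mkQ_range f))
  obtain h | h := min_le_iff.mp hmin
  · exact h
  · have htop : extGrade C L (C ⊗[R] (R ⧸ maximalIdeal R)) = ⊤ := by
      by_contra hne
      exact ((ENat.lt_add_one_iff hne).mpr le_rfl).not_ge ((add_le_add_left hcoker 1).trans h)
    exact htop ▸ le_top

theorem extGrade_baseChange_eq_add_localDepth
    (hL : ∀ r ∈ maximalIdeal R, algebraMap R C r ∈ Module.annihilator C L)
    (N : Type u) [AddCommGroup N] [Module R N] [Module.Finite R N] [Nontrivial N] :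
    extGrade C L (C ⊗[R] N) =
      extGrade C L (C ⊗[R] (R ⧸ maximalIdeal R)) + localDepth R N := by
  obtain ⟨rs, hlen, hmem, hrs⟩ := exists_isRegular_length_eq_localDepth (R := R) (M := N)
  obtain ⟨f, hf⟩ := exists_injective_quotient_maximalIdeal <|
    (length_lt_idealDepth_iff maximalIdeal_smul_top_lt_top hrs.1 hmem).not.mp hlen.not_lt
  rw [extGrade_baseChange_eq_add_length hrs.1 fun r hr ↦ hL r (hmem r hr), hlen,
    extGrade_baseChange_eq_of_injective hL hf]

end FlatBaseChange

section ClosedFiber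

open IsLocalRing RingTheory.Sequence

theorem localDepth_le_height_maximalIdeal {R : Type u} [CommRing R] [IsNoetherianRing R]
    [IsLocalRing R] : localDepth R R ≤ (maximalIdeal R).height := by
  rw [← WithBot.coe_le_coe, maximalIdeal_height_eq_ringKrullDim,
    ← Module.supportDim_self_eq_ringKrullDim]
  exact localDepth_le_supportDim

theorem localDepth_eq_idealDepth_of_surjective {C K : Type u} [CommRing C] [CommRing K]
    [IsLocalRing C] [IsLocalRing K] [Algebra C K] (h : Function.Surjective (algebraMap C K)) :
    localDepth K K = idealDepth C (maximalIdeal C) K := by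
  have hloc : IsLocalHom (algebraMap C K) := h.isLocalHom
  have : Module.Finite C K := .of_surjective (Algebra.linearMap C K) h
  apply le_antisymm
  · refine sSup_le_sSup ?_
    rintro _ ⟨rs, rfl, hmem, hrs⟩
    obtain ⟨rs, rfl⟩ := List.map_surjective_iff.mpr h rs
    rw [List.forall_mem_map] at hmem
    have hmem' : ∀ r ∈ rs, r ∈ maximalIdeal C := fun r hr hu ↦ hmem r hr (hu.map _)
    exact ⟨rs, by simp, hmem', .of_isWeaklyRegular_of_mem_maximalIdeal K hmem'
      ((isWeaklyRegular_map_algebraMap_iff K K rs).mp hrs.1)⟩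
  · refine sSup_le_sSup ?_
    rintro _ ⟨rs, rfl, hmem, hrs⟩
    have hmem' : ∀ r ∈ rs.map (algebraMap C K), r ∈ maximalIdeal K :=
      List.forall_mem_map.mpr fun r hr hu ↦ hmem r hr (hloc.map_nonunit r hu)
    exact ⟨rs.map (algebraMap C K), by simp, hmem', .of_isWeaklyRegular_of_mem_maximalIdeal K hmem'
      ((isWeaklyRegular_map_algebraMap_iff K K rs).mpr hrs.1)⟩

theorem isNoetherianRing_of_faithfullyFlat (R C : Type*) [CommRing R] [CommRing C] [Algebra R C]
    [Module.FaithfullyFlat R C] [IsNoetherianRing C] : IsNoetherianRing R := by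
  have hmap : StrictMono (Ideal.map (algebraMap R C)) :=
    Monotone.strictMono_of_injective (fun _ _ ↦ Ideal.map_mono)
      (Function.LeftInverse.injective Ideal.comap_map_eq_self_of_faithfullyFlat)
  exact isNoetherian_iff'.mpr hmap.wellFoundedGT

variable {R C K : Type u} [CommRing R] [CommRing C] [CommRing K] [IsLocalRing R] [IsLocalRing C]
  [IsLocalRing K] [IsNoetherianRing C] [Algebra R C] [Module.Flat R C]
  [IsLocalHom (algebraMap R C)] [Algebra C K]

theorem localDepth_eq_add_localDepth [IsNoetherianRing R]
    (hsurj : Function.Surjective (algebraMap C K))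
    (hker : RingHom.ker (algebraMap C K) = (maximalIdeal R).map (algebraMap R C)) :
    localDepth C C = localDepth K K + localDepth R R := by
  have : Module.Finite C K := .of_surjective (Algebra.linearMap C K) hsurj
  have hL : ∀ r ∈ maximalIdeal R,
      algebraMap R C r ∈ Module.annihilator C (C ⧸ maximalIdeal C) := fun r hr ↦ by
    rw [Ideal.annihilator_quotient]
    exact map_nonunit (algebraMap R C) r hr
  let e : C ⊗[R] (R ⧸ maximalIdeal R) ≃ₗ[C] K :=
    ((Algebra.TensorProduct.quotIdealMapEquivTensorQuot C (maximalIdeal R)).symm.trans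
      ((Ideal.quotientEquivAlgOfEq C hker.symm).trans
        (Ideal.quotientKerAlgEquivOfSurjective (f := Algebra.ofId C K) hsurj))).toLinearEquiv
  calc localDepth C C
      = extGrade C (C ⧸ maximalIdeal C) C := idealDepth_eq_extGrade maximalIdeal_smul_top_lt_top
    _ = extGrade C (C ⧸ maximalIdeal C) (C ⊗[R] R) :=
        (extGrade_congr (TensorProduct.AlgebraTensorModule.rid R C C)).symm
    _ = extGrade C (C ⧸ maximalIdeal C) (C ⊗[R] (R ⧸ maximalIdeal R)) + localDepth R R :=
        extGrade_baseChange_eq_add_localDepth hL R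
    _ = extGrade C (C ⧸ maximalIdeal C) K + localDepth R R := by rw [extGrade_congr e]
    _ = localDepth K K + localDepth R R := by
        rw [localDepth_eq_idealDepth_of_surjective hsurj,
          idealDepth_eq_extGrade maximalIdeal_smul_top_lt_top]

theorem height_maximalIdeal_eq_add [IsNoetherianRing R]
    (hsurj : Function.Surjective (algebraMap C K))
    (hker : RingHom.ker (algebraMap C K) = (maximalIdeal R).map (algebraMap R C)) :
    (maximalIdeal C).height = (maximalIdeal K).height + (maximalIdeal R).height := by
  let e : (C ⧸ (maximalIdeal R).map (algebraMap R C)) ≃+* K :=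
    (Ideal.quotEquivOfEq hker.symm).trans (RingHom.quotientKerEquivOfSurjective hsurj)
  have : IsLocalRing (C ⧸ (maximalIdeal R).map (algebraMap R C)) := e.symm.isLocalRing
  have : IsLocalHom (Ideal.Quotient.mk ((maximalIdeal R).map (algebraMap R C))) :=
    Ideal.Quotient.mk_surjective.isLocalHom
  have : (maximalIdeal C).LiesOver (maximalIdeal R) :=
    ⟨(maximalIdeal_comap (algebraMap R C)).symm⟩
  have hmap : (maximalIdeal C).map (Ideal.Quotient.mk ((maximalIdeal R).map (algebraMap R C))) =
      maximalIdeal _ := by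
    rw [← maximalIdeal_comap (Ideal.Quotient.mk ((maximalIdeal R).map (algebraMap R C))),
      Ideal.map_comap_of_surjective _ Ideal.Quotient.mk_surjective]
  have hK : (maximalIdeal K).height =
      (maximalIdeal (C ⧸ (maximalIdeal R).map (algebraMap R C))).height := by
    rw [← WithBot.coe_inj, maximalIdeal_height_eq_ringKrullDim,
      maximalIdeal_height_eq_ringKrullDim, ringKrullDim_eq_of_ringEquiv e]
  rw [Ideal.height_eq_height_add_of_liesOver_of_hasGoingDown (maximalIdeal R) (maximalIdeal C),
    hmap, hK, add_comm]

theorem height_maximalIdeal_le_localDepth_add_one_of_flat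
    (hsurj : Function.Surjective (algebraMap C K))
    (hker : RingHom.ker (algebraMap C K) = (maximalIdeal R).map (algebraMap R C))
    (hC : (maximalIdeal C).height ≤ localDepth C C + 1) :
    (maximalIdeal K).height ≤ localDepth K K + 1 := by
  have : Module.FaithfullyFlat R C := .of_flat_of_isLocalHom
  have : IsNoetherianRing R := isNoetherianRing_of_faithfullyFlat R C
  refine (ENat.add_le_add_iff_right (maximalIdeal R).height_ne_top_of_isPrime).mp ?_
  calc (maximalIdeal K).height + (maximalIdeal R).height
      = (maximalIdeal C).height := (height_maximalIdeal_eq_add hsurj hker).symm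
    _ ≤ localDepth C C + 1 := hC
    _ = localDepth K K + 1 + localDepth R R := by
        rw [localDepth_eq_add_localDepth hsurj hker, add_right_comm]
    _ ≤ localDepth K K + 1 + (maximalIdeal R).height := by
        gcongr
        exact localDepth_le_height_maximalIdeal

end ClosedFiber

section KangCriterion

open IsLocalRing RingTheory.Sequence

variable {R : Type u} [CommRing R]

theorem depthAt_self (P : PrimeSpectrum R) :
    depthAt R R P =
      localDepth (Localization.AtPrime P.asIdeal) (Localization.AtPrime P.asIdeal) :=
  idealDepth_congr <| LinearEquiv.extendScalarsOfIsLocalization P.asIdeal.primeCompl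
    (Localization.AtPrime P.asIdeal) <|
      IsLocalizedModule.iso P.asIdeal.primeCompl
        (Algebra.linearMap R (Localization.AtPrime P.asIdeal))

theorem isAlmostCMRing_iff : IsAlmostCMRing R ↔ ∀ (P : Ideal R) [P.IsPrime],
    idealDepth R P R = localDepth (Localization.AtPrime P) (Localization.AtPrime P) := by
  have hsupp : Module.support R R = Set.univ := by
    ext P
    simp [Module.support_of_algebra, Algebra.algebraMap_self, RingHom.ker_eq_comap_bot]
  simp only [IsAlmostCMRing, IsAlmostCMModule, hsupp, Set.mem_univ, forall_true_left, depthAt_self]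
  exact ⟨fun h P hP ↦ h ⟨P, hP⟩, fun h P ↦ h P.asIdeal⟩

theorem exists_mem_forall_notMem {S : Set (Ideal R)} (hS : S.Finite) (hprime : ∀ p ∈ S, p.IsPrime)
    {Q : Ideal R} (hQ : ∀ p ∈ S, ¬ Q ≤ p) : ∃ y ∈ Q, ∀ p ∈ S, y ∉ p := by
  have h := (Q.subset_union_prime_finite hS (f := id) ⊥ ⊥ fun p hp _ _ ↦ hprime p hp).not.mpr
    (by simpa using hQ)
  simpa [Set.not_subset] using h

section

variable (P : Ideal R) [P.IsPrime] {rs : List R}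

variable {P} in
theorem map_algebraMap_mem_maximalIdeal (hmem : ∀ r ∈ rs, r ∈ P) :
    ∀ r ∈ rs.map (algebraMap R (Localization.AtPrime P)),
      r ∈ maximalIdeal (Localization.AtPrime P) :=
  List.forall_mem_map.mpr fun r hr ↦
    (IsLocalization.AtPrime.to_map_mem_maximal_iff _ P r).mpr (hmem r hr)

theorem height_maximalIdeal_atPrime :
    (maximalIdeal (Localization.AtPrime P)).height = P.height := by
  rw [← IsLocalization.height_under P.primeCompl, Localization.AtPrime.under_maximalIdeal]

theorem idealDepth_le_localDepth :
    idealDepth R P R ≤ localDepth (Localization.AtPrime P) (Localization.AtPrime P) := by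
  refine sSup_le_sSup ?_
  rintro _ ⟨rs, rfl, hmem, hrs⟩
  exact ⟨rs.map (algebraMap R (Localization.AtPrime P)), by simp,
    map_algebraMap_mem_maximalIdeal hmem, hrs.1.isRegular_of_isLocalization_of_mem _ P hmem⟩

variable [IsNoetherianRing R]

theorem localDepth_le_height :
    localDepth (Localization.AtPrime P) (Localization.AtPrime P) ≤ P.height :=
  height_maximalIdeal_atPrime P ▸ localDepth_le_height_maximalIdeal

variable (rs) in
theorem maximalIdeal_mem_associatedPrimes_quotient_iff :
    maximalIdeal (Localization.AtPrime P) ∈ associatedPrimes (Localization.AtPrime P)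
      (Localization.AtPrime P ⧸ (Ideal.ofList (rs.map (algebraMap R (Localization.AtPrime P))) • ⊤ :
        Submodule (Localization.AtPrime P) (Localization.AtPrime P))) ↔
    P ∈ associatedPrimes R (R ⧸ (Ideal.ofList rs • ⊤ : Submodule R R)) := by
  have h : (Ideal.ofList rs • ⊤ : Submodule R R).localized' (Localization.AtPrime P) P.primeCompl
      (Algebra.linearMap R (Localization.AtPrime P)) =
      Ideal.ofList (rs.map (algebraMap R (Localization.AtPrime P))) • ⊤ := by
    rw [Submodule.localized'_smul, Ideal.localized'_eq_map, Submodule.localized'_top,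
      Ideal.map_ofList]
  open Module.associatedPrimes in
  rw [← h, ← preimage_comap_associatedPrimes_eq_associatedPrimes_of_isLocalizedModule
    P.primeCompl (Localization.AtPrime P) (Submodule.toLocalizedQuotient' (Localization.AtPrime P)
      P.primeCompl (Algebra.linearMap R (Localization.AtPrime P)) (Ideal.ofList rs • ⊤)),
    Set.mem_preimage]
  exact iff_of_eq (congrArg (· ∈ _) Localization.AtPrime.under_maximalIdeal)

variable {P} in
theorem length_lt_localDepth_iff (hrs : IsWeaklyRegular R rs) (hmem : ∀ r ∈ rs, r ∈ P) :
    rs.length < localDepth (Localization.AtPrime P) (Localization.AtPrime P) ↔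
      P ∉ associatedPrimes R (R ⧸ (Ideal.ofList rs • ⊤ : Submodule R R)) := by
  rw [← maximalIdeal_mem_associatedPrimes_quotient_iff,
    ← List.length_map (algebraMap R (Localization.AtPrime P)), localDepth,
    length_lt_idealDepth_iff maximalIdeal_smul_top_lt_top
      (hrs.of_isLocalization (Localization.AtPrime P) P.primeCompl)
      (map_algebraMap_mem_maximalIdeal hmem), exists_isSMulRegular_mem_iff]
  refine ⟨fun h hP ↦ h _ hP le_rfl, fun h p hp hle ↦ h ?_⟩
  rwa [(maximalIdeal.isMaximal _).eq_of_le hp.isPrime.ne_top hle]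

theorem exists_isRegular_length_eq_idealDepth :
    ∃ rs : List R, rs.length = idealDepth R P R ∧ (∀ r ∈ rs, r ∈ P) ∧ IsRegular R rs := by
  have : Nontrivial R := ⟨0, 1, fun h ↦ ‹P.IsPrime›.one_notMem (h ▸ P.zero_mem)⟩
  obtain ⟨n, hn⟩ := ENat.ne_top_iff_exists.mp
    (ne_top_of_le_ne_top localDepth_ne_top (idealDepth_le_localDepth P))
  obtain ⟨rs, rfl, hmem, hrs⟩ := natCast_le_idealDepth_iff.mp hn.le
  exact ⟨rs, hn, hmem, hrs⟩

/-- Take for `Q` an associated prime, containing `P`, of `R` modulo a maximal regular sequence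
in `P`. -/
theorem exists_localDepth_le_idealDepth :
    ∃ (Q : Ideal R) (_ : Q.IsPrime), P ≤ Q ∧
      localDepth (Localization.AtPrime Q) (Localization.AtPrime Q) ≤ idealDepth R P R := by
  obtain ⟨rs, hlen, hmem, hrs⟩ := exists_isRegular_length_eq_idealDepth P
  have htop : P • (⊤ : Submodule R R) < ⊤ := by simpa using ‹P.IsPrime›.ne_top.lt_top
  have hnot := (length_lt_idealDepth_iff htop hrs.1 hmem).not.mp hlen.not_lt
  rw [exists_isSMulRegular_mem_iff] at hnot
  push Not at hnot
  obtain ⟨Q, hQ, hPQ⟩ := hnot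
  have : Q.IsPrime := hQ.isPrime
  refine ⟨Q, this, hPQ, hlen ▸ not_lt.mp fun hlt ↦ ?_⟩
  exact (length_lt_localDepth_iff hrs.1 fun r hr ↦ hPQ (hmem r hr)).mp hlt hQ

end

variable [IsNoetherianRing R]

/-- Take for `P` a minimal prime of `rs` and one more element of `Q`, chosen by prime avoidance
outside the associated primes of `R` modulo `rs` that do not contain `Q`; `P ≠ Q` by Krull's height
theorem. -/
theorem exists_lt_length_lt_localDepth {Q : Ideal R} [Q.IsPrime] {rs : List R}
    (hrs : IsWeaklyRegular R rs) (hmem : ∀ r ∈ rs, r ∈ Q) (hlt : rs.length + 1 < Q.height) :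
    ∃ (P : Ideal R) (_ : P.IsPrime), P < Q ∧
      rs.length < localDepth (Localization.AtPrime P) (Localization.AtPrime P) := by
  classical
  let S := associatedPrimes R (R ⧸ (Ideal.ofList rs • ⊤ : Submodule R R))
  obtain ⟨y, hyQ, hy⟩ := exists_mem_forall_notMem (S := {p ∈ S | ¬ Q ≤ p}) (Q := Q)
    ((associatedPrimes.finite R _).subset (Set.sep_subset _ _)) (fun p hp ↦ hp.1.isPrime)
    fun p hp ↦ hp.2
  obtain ⟨P, hP, hPQ⟩ := Ideal.exists_minimalPrimes_le
    (I := Ideal.span (insert y rs.toFinset : Finset R)) (J := Q)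
    (Ideal.span_le.mpr (by simpa [Set.insert_subset_iff, hyQ, Set.subset_def] using hmem))
  have : P.IsPrime := hP.isPrime
  have hsub : ∀ r ∈ insert y rs.toFinset, r ∈ P := fun r hr ↦ hP.le (Ideal.subset_span hr)
  have hne : P < Q := by
    refine hPQ.lt_of_ne ?_
    rintro rfl
    refine hlt.not_ge ((Ideal.height_le_card_of_mem_minimalPrimes_span_finset hP).trans ?_)
    exact_mod_cast (Finset.card_insert_le _ _).trans (by gcongr; exact rs.toFinset_card_le)
  refine ⟨P, this, hne, (length_lt_localDepth_iff hrs fun r hr ↦ hsub r (by simp [hr])).mpr ?_⟩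
  exact fun hPS ↦ hy P ⟨hPS, hne.not_ge⟩ (hsub y (by simp))

theorem isAlmostCMRing_iff_height_le : IsAlmostCMRing R ↔ ∀ (P : Ideal R) [P.IsPrime],
    P.height ≤ localDepth (Localization.AtPrime P) (Localization.AtPrime P) + 1 := by
  rw [isAlmostCMRing_iff]
  refine ⟨fun h Q _ ↦ ?_, fun h P _ ↦ (idealDepth_le_localDepth P).antisymm ?_⟩
  · obtain ⟨rs, hlen, hmem, hrs⟩ := exists_isRegular_length_eq_idealDepth Q
    by_contra! hlt
    rw [← h Q, ← hlen] at hlt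
    obtain ⟨P, _, hPQ, hP⟩ := exists_lt_length_lt_localDepth hrs.1 hmem hlt
    rw [hlen, ← h P] at hP
    exact hP.not_ge (idealDepth_mono hPQ.le)
  · obtain ⟨Q, _, hPQ, hQ⟩ := exists_localDepth_le_idealDepth P
    obtain rfl | hlt := hPQ.eq_or_lt
    · exact hQ
    refine (localDepth_le_height P).trans ((ENat.add_le_add_iff_right ENat.one_ne_top).mp ?_)
    calc P.height + 1 ≤ Q.height := Ideal.height_add_one_le_of_lt_of_isPrime hlt
      _ ≤ localDepth (Localization.AtPrime Q) (Localization.AtPrime Q) + 1 := h Q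
      _ ≤ idealDepth R P R + 1 := by gcongr

end KangCriterion

section Localization

open IsLocalRing

theorem localDepth_eq_of_ringEquiv {C K : Type u} [CommRing C] [CommRing K] [IsLocalRing C]
    [IsLocalRing K] (e : C ≃+* K) : localDepth C C = localDepth K K := by
  algebraize [e.toRingHom]
  rw [localDepth_eq_idealDepth_of_surjective (C := C) (K := K) e.surjective]
  exact idealDepth_congr (LinearEquiv.ofBijective (Algebra.linearMap C K) e.bijective)

theorem IsAlmostCMRing.of_isLocalization {R : Type u} [CommRing R] [IsNoetherianRing R]
    (hR : IsAlmostCMRing R) (S : Submonoid R) (D : Type u) [CommRing D] [Algebra R D]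
    [IsLocalization S D] : IsAlmostCMRing D := by
  have : IsNoetherianRing D := IsLocalization.isNoetherianRing S D ‹_›
  refine isAlmostCMRing_iff_height_le.mpr fun q _ ↦ ?_
  have : IsLocalization.AtPrime (Localization.AtPrime q) (q.under R) :=
    IsLocalization.isLocalization_isLocalization_atPrime_isLocalization S _ q
  have e : Localization.AtPrime (q.under R) ≃ₐ[R] Localization.AtPrime q :=
    IsLocalization.algEquiv (q.under R).primeCompl _ _
  rw [← IsLocalization.height_under S q, ← localDepth_eq_of_ringEquiv e.toRingEquiv]
  exact isAlmostCMRing_iff_height_le.mp hR (q.under R)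

theorem ker_localRingHom_of_surjective {D E : Type*} [CommRing D] [CommRing E] {f : D →+* E}
    (hf : Function.Surjective f) (q : Ideal E) [q.IsPrime] :
    RingHom.ker (Localization.localRingHom (q.comap f) q f rfl) =
      (RingHom.ker f).map (algebraMap D (Localization.AtPrime (q.comap f))) := by
  refine IsLocalization.ker_map (Localization.AtPrime q) f (SetLike.coe_injective ?_)
  exact Set.image_preimage_eq (q : Set E)ᶜ hf

theorem map_localRingHom_maximalIdeal {R D : Type*} [CommRing R] [CommRing D] {f : R →+* D}
    {p : Ideal R} [p.IsPrime] {Q : Ideal D} [Q.IsPrime] (h : p = Q.comap f) :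
    (maximalIdeal (Localization.AtPrime p)).map (Localization.localRingHom p Q f h) =
      (p.map f).map (algebraMap D (Localization.AtPrime Q)) := by
  have hcomp : (Localization.localRingHom p Q f h).comp (algebraMap R (Localization.AtPrime p)) =
      (algebraMap D (Localization.AtPrime Q)).comp f :=
    RingHom.ext (Localization.localRingHom_to_map p Q f h)
  rw [← Localization.AtPrime.map_eq_maximalIdeal, Ideal.map_map, Ideal.map_map, hcomp]

theorem IsAlmostCMRing.quotient_map_of_flat {R D : Type u} [CommRing R] [CommRing D]
    [IsNoetherianRing D] [Algebra R D] [Module.Flat R D] (hD : IsAlmostCMRing D) (p : Ideal R)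
    [p.IsPrime] (hp : ∀ r ∉ p, IsUnit (algebraMap R D r)) :
    IsAlmostCMRing (D ⧸ p.map (algebraMap R D)) := by
  refine isAlmostCMRing_iff_height_le.mpr fun q _ ↦ ?_
  let π := Ideal.Quotient.mk (p.map (algebraMap R D))
  let Q := q.comap π
  have hpQ : p = Q.comap (algebraMap R D) := by
    refine le_antisymm (Ideal.map_le_iff_le_comap.mp ?_) fun r hr ↦ ?_
    · exact Ideal.mk_ker.symm.trans_le (Ideal.ker_le_comap π)
    · by_contra hrp
      exact Ideal.IsPrime.ne_top inferInstance (Q.eq_top_of_isUnit_mem hr (hp r hrp))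
  let f : Localization.AtPrime p →+* Localization.AtPrime Q :=
    Localization.localRingHom p Q (algebraMap R D) hpQ
  let g : Localization.AtPrime Q →+* Localization.AtPrime q := Localization.localRingHom Q q π rfl
  have hf : f.Flat := RingHom.Flat.localRingHom (RingHom.flat_algebraMap_iff.mpr ‹_›) _ _ _
  have hfl : IsLocalHom f := Localization.isLocalHom_localRingHom _ _ _ _
  have hg : Function.Surjective g :=
    RingHom.surjectiveOnStalks_of_surjective Ideal.Quotient.mk_surjective q ‹_›
  have hker : RingHom.ker g = (maximalIdeal (Localization.AtPrime p)).map f := by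
    rw [ker_localRingHom_of_surjective Ideal.Quotient.mk_surjective,
      map_localRingHom_maximalIdeal, Ideal.mk_ker]
  algebraize [f, g]
  have hQ := isAlmostCMRing_iff_height_le.mp hD Q
  rw [← height_maximalIdeal_atPrime] at hQ ⊢
  exact height_maximalIdeal_le_localDepth_add_one_of_flat (R := Localization.AtPrime p)
    (C := Localization.AtPrime Q) hg hker hQ

end Localization

theorem fibers_of_flat_almostCM_general (A B : Type u) [CommRing A] [CommRing B]
    [IsNoetherianRing B] [Algebra A B] [Module.Flat A B] (hB : IsAlmostCMRing B)
    (P : PrimeSpectrum A) : IsAlmostCMRing (fiberRing A B P) := by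
  let D := Localization (fiberSubmonoid A B P)
  have : IsNoetherianRing D := IsLocalization.isNoetherianRing (fiberSubmonoid A B P) D ‹_›
  have : Module.Flat B D := IsLocalization.flat D (fiberSubmonoid A B P)
  have : Module.Flat A D := .trans A B D
  have hunit : ∀ a ∉ P.asIdeal, IsUnit (algebraMap A D a) := fun a ha ↦
    IsLocalization.map_units D (⟨_, a, ha, rfl⟩ : fiberSubmonoid A B P)
  exact (hB.of_isLocalization (fiberSubmonoid A B P) D).quotient_map_of_flat P.asIdeal hunit

theorem fibers_of_flat_almostCM (A B : Type u) [CommRing A] [CommRing B]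
    [IsNoetherianRing A] [IsNoetherianRing B] [Algebra A B] [Module.Flat A B]
    (hB : IsAlmostCMRing B) (P : PrimeSpectrum A) :
    IsAlmostCMRing (fiberRing A B P) :=
  fibers_of_flat_almostCM_general A B hB P

end
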